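/- Let the input be a centered stationary Gaussian process {X_{j,k}} with absolutely continuous spectral measure of density f(x,y) = |xy|^{−1/2} on [−π,π]². Then the fourth moment of the limiting spectral distribution is infinite: ∫_ℝ x⁴ μ_f(dx) = ∞. -/

import Mathlib

open MeasureTheory ProbabilityTheory Filter Real

noncomputable section

/-- The square `(-π, π]²` on which the spectral measure lives. -/
def specBox : Set (ℝ × ℝ) := Set.Ioc (-π) π ×ˢ Set.Ioc (-π) π

/-- `(1/N) ∑_j g(λ_j(A))`, the integral of `g` against the empirical spectral
distribution of a symmetric `N × N` real matrix `A` (junk value `0` if `A` is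
not symmetric). -/
def esdEval {N : ℕ} (A : Matrix (Fin N) (Fin N) ℝ) (g : ℝ → ℝ) : ℝ :=
  if hA : A.IsHermitian then (N : ℝ)⁻¹ * ∑ j, g (hA.eigenvalues j) else 0

/-- The (random) empirical spectral distributions of `A N` converge weakly in
probability to the probability measure `μ`: for every bounded continuous `g`,
`∫ g d(ESD(A N)) → ∫ g dμ` in probability. -/
def ESDTendstoInProb {Ω : Type*} [MeasurableSpace Ω] (P : Measure Ω)
    (A : (N : ℕ) → Ω → Matrix (Fin N) (Fin N) ℝ) (μ : Measure ℝ) : Prop :=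
  ∀ g : ℝ → ℝ, Continuous g → (∃ C, ∀ x, |g x| ≤ C) →
    ∀ ε > 0, Tendsto (fun N => P {ω | ε ≤ |esdEval (A N ω) g - ∫ x, g x ∂μ|})
      atTop (nhds 0)

/-- The symmetric matrix `W_N/√N`, where `W_N(i,j) = X_{i,j} + X_{j,i}`,
`1 ≤ i,j ≤ N`. -/
def scaledW {Ω : Type*} (X : ℤ → ℤ → Ω → ℝ) (N : ℕ) (ω : Ω) :
    Matrix (Fin N) (Fin N) ℝ :=
  fun i j => (Real.sqrt N)⁻¹ *
    (X ((i : ℕ) + 1) ((j : ℕ) + 1) ω + X ((j : ℕ) + 1) ((i : ℕ) + 1) ω)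

/-- A centered stationary Gaussian process indexed by `ℤ²` with positive
variance: every finite real linear combination is a centered Gaussian random
variable, and second moments are shift invariant. -/
structure StatGauss {Ω : Type*} [MeasurableSpace Ω] (P : Measure Ω)
    (X : ℤ → ℤ → Ω → ℝ) : Prop where
  meas : ∀ j k, Measurable (X j k)
  gauss : ∀ c : (ℤ × ℤ) →₀ ℝ, ∃ v : NNReal,
    P.map (fun ω => ∑ p ∈ c.support, c p * X p.1 p.2 ω) = gaussianReal 0 v
  var_pos : 0 < ∫ ω, (X 0 0 ω) ^ 2 ∂P
  stat : ∀ j k u v : ℤ,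
    ∫ ω, X j k ω * X (j + u) (k + v) ω ∂P = ∫ ω, X 0 0 ω * X u v ω ∂P

/-- The process `X` has absolutely continuous spectral measure with density
`h` on `(-π,π]²`: `E[X_{0,0} X_{u,v}] = ∫∫ e^{i(ux+vy)} h(x,y) dx dy`. -/
def HasSpecDensity {Ω : Type*} [MeasurableSpace Ω] (P : Measure Ω)
    (X : ℤ → ℤ → Ω → ℝ) (h : ℝ × ℝ → ℝ) : Prop :=
  ∀ u v : ℤ,
    (∫ q in specBox,
        Complex.exp (Complex.I * ((u * q.1 + v * q.2 : ℝ) : ℂ)) * ((h q : ℝ) : ℂ))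
      = ((∫ ω, X 0 0 ω * X u v ω ∂P : ℝ) : ℂ)


lemma gauss_moments (v : NNReal) : ∫ x, x ^ 2 ∂(gaussianReal 0 v) = v ∧ 
    ∫ x, x ^ 4 ∂(gaussianReal 0 v) = 3 * (v:ℝ) ^ 2 := by
  have key : ∀ n, iteratedDeriv n (mgf id (gaussianReal 0 v)) 0 = ∫ x, x ^ n ∂(gaussianReal 0 v) := by
    intro n
    rw [iteratedDeriv_mgf_zero] <;> simp
  have d (p p' : ℝ → ℝ) (hp : ∀ t, HasDerivAt p (p' t) t) :
      deriv (fun t => p t * rexp (v * t ^ 2 / 2)) = fun t => (p' t + p t * (v * t)) * rexp (v * t ^ 2 / 2) := by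
    funext t
    have h1 : HasDerivAt (fun t : ℝ => (v:ℝ) * t ^ 2 / 2) (v * t) t := by
      have := (((hasDerivAt_id t).pow 2).const_mul (v:ℝ)).div_const 2
      convert! this using 1
      simp; ring
    have := ((hp t).mul h1.exp).deriv
    rw [show (fun t => p t * rexp (v * t ^ 2 / 2)) = p * fun t => rexp (v * t ^ 2 / 2) from rfl, this]
    ring
  have e0 : mgf id (gaussianReal 0 v) = fun t => (1:ℝ) * rexp (v * t ^ 2 / 2) := by
    rw [mgf_id_gaussianReal]; funext t; simp
  have e1 := d (fun _ => 1) (fun _ => 0) (fun t => hasDerivAt_const t _)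
  have e2 := d (fun t => 0 + 1 * (v * t)) (fun _ => v) (fun t => by
    simpa using (hasDerivAt_id t).const_mul (v:ℝ))
  have e3 := d (fun t => v + (0 + 1 * (v * t)) * (v * t)) (fun t => 2 * v ^ 2 * t) (fun t => by
    have := (((hasDerivAt_id t).pow 2).const_mul ((v:ℝ)^2)).const_add (v:ℝ)
    convert! this using 1
    · funext s; simp; ring
    · simp; ring)
  have e4 := d (fun t => 2 * v ^ 2 * t + (v + (0 + 1 * (v * t)) * (v * t)) * (v * t))
    (fun t => 3 * v ^ 2 + 3 * v ^ 3 * t ^ 2) (fun t => by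
    have := ((hasDerivAt_id t).const_mul (3 * (v:ℝ)^2)).add (((hasDerivAt_id t).pow 3).const_mul ((v:ℝ)^3))
    convert! this using 1
    · funext s; simp; ring
    · simp; ring)
  constructor
  · rw [← key 2, iteratedDeriv_succ, iteratedDeriv_one, e0, e1, e2]; simp
  · rw [← key 4, iteratedDeriv_succ, iteratedDeriv_succ, iteratedDeriv_succ, iteratedDeriv_one, e0, e1, e2, e3, e4]; simp

section
variable {Ω : Type*} [MeasurableSpace Ω] {P : Measure Ω}

lemma map_gauss_moments {f : Ω → ℝ} (hf : Measurable f) {v : NNReal} (h : P.map f = gaussianReal 0 v) :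
    MemLp f 4 P ∧ ∫ ω, f ω ^ 4 ∂P = 3 * (∫ ω, f ω ^ 2 ∂P) ^ 2 := by
  refine ⟨?_, ?_⟩
  · have : MemLp id 4 (P.map f) := by rw [h]; exact memLp_id_gaussianReal 4
    exact (memLp_map_measure_iff (by fun_prop) hf.aemeasurable).1 this
  · have a : ∀ n, ∫ ω, f ω ^ n ∂P = ∫ x, x ^ n ∂(P.map f) := fun n => by
      rw [integral_map hf.aemeasurable (by fun_prop)]
    rw [a, a, h, (gauss_moments v).1, (gauss_moments v).2]

lemma int4 [IsProbabilityMeasure P] {x y z w : Ω → ℝ} (hx : MemLp x 4 P) (hy : MemLp y 4 P) (hz : MemLp z 4 P)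
    (hw : MemLp w 4 P) : Integrable (fun ω => x ω * y ω * z ω * w ω) P := by
  have h422 : ENNReal.HolderTriple 4 4 2 := ⟨by
    rw [← ENNReal.toReal_eq_toReal_iff' (by simp) (by simp), ENNReal.toReal_add (by simp) (by simp)]; norm_num⟩
  have h1 : MemLp (fun ω => x ω * y ω) 2 P := hy.mul' hx
  have h2 : MemLp (fun ω => z ω * w ω) 2 P := hw.mul' hz
  have := h1.integrable_mul h2
  simpa [mul_assoc, Pi.mul_def] using this

lemma int2 [IsProbabilityMeasure P] {x y : Ω → ℝ} (hx : MemLp x 4 P) (hy : MemLp y 4 P) :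
    Integrable (fun ω => x ω * y ω) P := by
  have h1 : MemLp x 2 P := hx.mono_exponent (by norm_num)
  have h2 : MemLp y 2 P := hy.mono_exponent (by norm_num)
  exact h1.integrable_mul h2

lemma isserlis [IsProbabilityMeasure P] {x y z w : Ω → ℝ} (mx : Measurable x) (my : Measurable y)
    (mz : Measurable z) (mw : Measurable w) 
    (h : ∀ a b c d : ℝ, ∃ v, P.map (fun ω => a * x ω + b * y ω + c * z ω + d * w ω) = gaussianReal 0 v) :
    ∫ ω, x ω * y ω * z ω * w ω ∂P = (∫ ω, x ω * y ω ∂P) * (∫ ω, z ω * w ω ∂P)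
     + (∫ ω, x ω * z ω ∂P) * (∫ ω, y ω * w ω ∂P) + (∫ ω, x ω * w ω ∂P) * (∫ ω, y ω * z ω ∂P) := by
  have m : ∀ a b c d : ℝ, MemLp (fun ω => a * x ω + b * y ω + c * z ω + d * w ω) 4 P ∧
      ∫ ω, (a * x ω + b * y ω + c * z ω + d * w ω) ^ 4 ∂P
       = 3 * (∫ ω, (a * x ω + b * y ω + c * z ω + d * w ω) ^ 2 ∂P) ^ 2 := fun a b c d => by
    obtain ⟨v, hv⟩ := h a b c d
    exact map_gauss_moments (by fun_prop) hv
  have hx : MemLp x 4 P := by simpa using (m 1 0 0 0).1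
  have hy : MemLp y 4 P := by simpa using (m 0 1 0 0).1
  have hz : MemLp z 4 P := by simpa using (m 0 0 1 0).1
  have hw : MemLp w 4 P := by simpa using (m 0 0 0 1).1
  have i4 : ∀ a b c d : ℝ, Integrable (fun ω => (a * x ω + b * y ω + c * z ω + d * w ω) ^ 4) P := fun a b c d => by
    have t := (m a b c d).1
    convert int4 t t t t using 2
    ring
  have sq : ∀ a b c d : ℝ, ∫ ω, (a * x ω + b * y ω + c * z ω + d * w ω) ^ 2 ∂P =
     a^2 * ∫ ω, x ω * x ω ∂P + b^2 * ∫ ω, y ω * y ω ∂P + c^2 * ∫ ω, z ω * z ω ∂P + d^2 * ∫ ω, w ω * w ω ∂P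
     + 2*a*b * ∫ ω, x ω * y ω ∂P + 2*a*c * ∫ ω, x ω * z ω ∂P + 2*a*d * ∫ ω, x ω * w ω ∂P
     + 2*b*c * ∫ ω, y ω * z ω ∂P + 2*b*d * ∫ ω, y ω * w ω ∂P + 2*c*d * ∫ ω, z ω * w ω ∂P := by
    intro a b c d
    have i1 := int2 hx hx
    have i2 := int2 hy hy
    have i3 := int2 hz hz
    have i4 := int2 hw hw
    have i5 := int2 hx hy
    have i6 := int2 hx hz
    have i7 := int2 hx hw
    have i8 := int2 hy hz
    have i9 := int2 hy hw
    have i10 := int2 hz hw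
    simp only [← integral_const_mul]
    rw [← integral_add, ← integral_add, ← integral_add, ← integral_add, ← integral_add, ← integral_add, ← integral_add, ← integral_add, ← integral_add]
    · congr 1; funext ω; ring
    all_goals fun_prop
  have pol : ∀ ω, x ω * y ω * z ω * w ω = (1/192) * (
      (1 * x ω + 1 * y ω + 1 * z ω + 1 * w ω) ^ 4 + (1 * x ω + (-1) * y ω + (-1) * z ω + 1 * w ω) ^ 4
      + (1 * x ω + (-1) * y ω + 1 * z ω + (-1) * w ω) ^ 4 + (1 * x ω + 1 * y ω + (-1) * z ω + (-1) * w ω) ^ 4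
      - (1 * x ω + (-1) * y ω + 1 * z ω + 1 * w ω) ^ 4 - (1 * x ω + 1 * y ω + (-1) * z ω + 1 * w ω) ^ 4
      - (1 * x ω + 1 * y ω + 1 * z ω + (-1) * w ω) ^ 4 - (1 * x ω + (-1) * y ω + (-1) * z ω + (-1) * w ω) ^ 4) := by
    intro ω; ring
  simp_rw [pol]
  rw [integral_const_mul, integral_sub, integral_sub, integral_sub, integral_sub, integral_add, integral_add, integral_add]
  · simp only [(m _ _ _ _).2, sq]
    ring
  all_goals repeat' first | exact i4 _ _ _ _ | exact (i4 _ _ _ _).neg | apply Integrable.fun_add | apply Integrable.fun_sub | apply Integrable.add | apply Integrable.sub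
end


section
variable {N : ℕ}

def frob (M : Matrix (Fin N) (Fin N) ℝ) : ℝ := ∑ i, ∑ j, M i j ^ 2

lemma frob_eq (M : Matrix (Fin N) (Fin N) ℝ) : frob M = (M.transpose * M).trace := by
  simp only [frob, Matrix.trace, Matrix.mul_apply, Matrix.transpose_apply, Matrix.diag]
  rw [Finset.sum_comm]
  simp [pow_two]

lemma frob_conj (O M : Matrix (Fin N) (Fin N) ℝ) (hO : O * O.transpose = 1) :
    frob (O.transpose * M * O) = frob M := by
  rw [frob_eq, frob_eq]
  simp only [Matrix.transpose_mul, Matrix.transpose_transpose]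
  rw [show O.transpose * (M.transpose * O) * (O.transpose * M * O) 
    = O.transpose * (M.transpose * (O * O.transpose) * M * O) by simp only [Matrix.mul_assoc], hO,
    Matrix.trace_mul_comm]
  simp [Matrix.mul_assoc, hO]

lemma diag2_le (Z : Matrix (Fin N) (Fin N) ℝ) : ∑ j, Z j j ^ 2 ≤ frob Z := by
  refine Finset.sum_le_sum fun i _ => ?_
  exact Finset.single_le_sum (f := fun j => Z i j ^ 2) (fun j _ => sq_nonneg _) (Finset.mem_univ i)

lemma diag4_le (Z : Matrix (Fin N) (Fin N) ℝ) : ∑ j, Z j j ^ 4 ≤ frob (Z.transpose * Z) := by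
  refine le_trans (Finset.sum_le_sum fun j _ => ?_) (diag2_le _)
  have h : Z j j ^ 2 ≤ (Z.transpose * Z) j j := by
    rw [Matrix.mul_apply]
    simp only [Matrix.transpose_apply, ← pow_two]
    exact Finset.single_le_sum (f := fun i => Z i j ^ 2) (fun j _ => sq_nonneg _) (Finset.mem_univ j)
  calc Z j j ^ 4 = (Z j j ^ 2) ^ 2 := by ring
    _ ≤ _ := by gcongr

lemma scalar_ineq (l p q s L Q : ℝ) (hQ : 0 < Q) (hs : |s| ≤ L) (hl : l = p + q) :
    2 * l ^ 2 * s - s ^ 2 - 2 * L * (16 / Q * p ^ 4 + 4 * q ^ 2) ≤ min (l ^ 4) (Q ^ 2) := by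
  have hL : 0 ≤ L := (abs_nonneg s).trans hs
  have hs' := (abs_le.1 hs).2
  have e : 0 ≤ 2 * L * (16 / Q * p ^ 4 + 4 * q ^ 2) := by positivity
  by_cases h : l ^ 2 ≤ Q
  · rw [min_eq_left (by nlinarith [sq_nonneg l])]
    nlinarith [sq_nonneg (l ^ 2 - s)]
  · push Not at h
    have key : l ^ 2 ≤ 16 / Q * p ^ 4 + 4 * q ^ 2 := by
      by_cases hpq : |q| ≤ |p|
      · have h1 : l ^ 2 ≤ 4 * p ^ 2 := by
          have h2 : |l| ≤ 2 * |p| := by rw [hl]; linarith [abs_add_le p q]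
          have := pow_le_pow_left₀ (abs_nonneg l) h2 2
          rw [mul_pow, sq_abs, sq_abs] at this; linarith
        have h2 : l ^ 2 * Q ≤ 16 * p ^ 4 := by nlinarith [sq_nonneg p, sq_nonneg l]
        have h3 : l ^ 2 ≤ 16 / Q * p ^ 4 := by
          rw [div_mul_eq_mul_div, le_div_iff₀ hQ]; exact h2
        nlinarith [sq_nonneg q]
      · push Not at hpq
        have h1 : l ^ 2 ≤ 4 * q ^ 2 := by
          have h2 : |l| ≤ 2 * |q| := by rw [hl]; linarith [abs_add_le p q]
          have := pow_le_pow_left₀ (abs_nonneg l) h2 2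
          rw [mul_pow, sq_abs, sq_abs] at this; linarith
        have : 0 ≤ 16 / Q * p ^ 4 := by positivity
        linarith
    have h5 : 0 ≤ min (l ^ 4) (Q ^ 2) := by positivity
    nlinarith [mul_le_mul_of_nonneg_left key hL, mul_le_mul_of_nonneg_left hs' (sq_nonneg l), sq_nonneg s]

lemma spec_real {A : Matrix (Fin N) (Fin N) ℝ} (hA : A.IsHermitian) :
    ∃ U : Matrix (Fin N) (Fin N) ℝ, U * U.transpose = 1 ∧ U.transpose * U = 1 ∧
      A = U * Matrix.diagonal hA.eigenvalues * U.transpose := by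
  refine ⟨hA.eigenvectorUnitary, ?_, ?_, ?_⟩
  · have := Matrix.mem_unitaryGroup_iff.1 hA.eigenvectorUnitary.2
    rwa [Matrix.star_eq_conjTranspose, Matrix.conjTranspose_eq_transpose_of_trivial] at this
  · have := Matrix.mem_unitaryGroup_iff'.1 hA.eigenvectorUnitary.2
    rwa [Matrix.star_eq_conjTranspose, Matrix.conjTranspose_eq_transpose_of_trivial] at this
  · have := hA.spectral_theorem
    rw [Unitary.conjStarAlgAut_apply] at this
    rw [Matrix.star_eq_conjTranspose, Matrix.conjTranspose_eq_transpose_of_trivial] at this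
    exact this

lemma det_main (A x V Y1 Y2 S : Matrix (Fin N) (Fin N) ℝ) (s L Q : ℝ) (hA : A.IsHermitian)
    (hAx : A = s • (x + x.transpose)) (hV : V * V.transpose = 1) (hV' : V.transpose * V = 1)
    (hY : V.transpose * x * V = Y1 + Y2) (hQ : 0 < Q)
    (hS : ∀ u : Fin N → ℝ, ∑ i, u i ^ 2 = 1 → |∑ i, ∑ k, u i * S i k * u k| ≤ L) :
    2 * (A * A * S).trace - frob S - 2 * L * (256 * s ^ 4 / Q * frob (Y1.transpose * Y1) + 16 * s ^ 2 * frob Y2)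
     ≤ ∑ j, min (hA.eigenvalues j ^ 4) (Q ^ 2) := by
  obtain ⟨U, hU, hU', hAU⟩ := spec_real hA
  set l := hA.eigenvalues with hl
  have hD : U.transpose * A * U = Matrix.diagonal l := by
    conv_lhs => rw [hAU]
    rw [show U.transpose * (U * Matrix.diagonal l * U.transpose) * U = 
      (U.transpose * U) * Matrix.diagonal l * (U.transpose * U) by simp only [Matrix.mul_assoc], hU']
    simp
  let O := V.transpose * U
  have hO : O * O.transpose = 1 := by
    simp only [O, Matrix.transpose_mul, Matrix.transpose_transpose]
    rw [show V.transpose * U * (U.transpose * V) = V.transpose * (U * U.transpose) * V by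
      simp only [Matrix.mul_assoc], hU]
    simpa using hV'
  let Z1 := O.transpose * Y1 * O
  let Z2 := O.transpose * Y2 * O
  let S' := U.transpose * S * U
  have hx : U.transpose * x * U = Z1 + Z2 := by
    have : Z1 + Z2 = O.transpose * (Y1 + Y2) * O := by simp [Z1, Z2, mul_add, add_mul]
    rw [this, ← hY]
    simp only [O, Matrix.transpose_mul, Matrix.transpose_transpose]
    rw [show U.transpose * V * (V.transpose * x * V) * (V.transpose * U) = 
      U.transpose * (V * V.transpose) * x * (V * V.transpose) * U by simp only [Matrix.mul_assoc], hV]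
    simp
  have hlj : ∀ j, l j = 2 * s * Z1 j j + 2 * s * Z2 j j := by
    intro j
    have h1 : l j = (U.transpose * A * U) j j := by rw [hD]; simp
    have h2 : U.transpose * A * U = s • ((U.transpose * x * U) + (U.transpose * x * U).transpose) := by
      rw [hAx]; simp [mul_add, add_mul, Matrix.mul_assoc]
    rw [h1, h2, hx]
    simp; ring
  have htr : (A * A * S).trace = ∑ j, l j ^ 2 * S' j j := by
    conv_lhs => rw [hAU]
    rw [show U * Matrix.diagonal l * U.transpose * (U * Matrix.diagonal l * U.transpose) * S
      = U * (Matrix.diagonal l * (U.transpose * U) * Matrix.diagonal l * U.transpose * S) by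
      simp only [Matrix.mul_assoc], hU', Matrix.trace_mul_comm]
    simp only [Matrix.mul_one, Matrix.diagonal_mul_diagonal]
    simp only [Matrix.trace, Matrix.diag, Matrix.mul_assoc, Matrix.diagonal_mul, S', pow_two]
  have hfS : ∑ j, S' j j ^ 2 ≤ frob S := by
    rw [← frob_conj U S hU]; exact diag2_le _
  have hf2 : ∑ j, Z2 j j ^ 2 ≤ frob Y2 := by
    rw [← frob_conj O Y2 hO]; exact diag2_le _
  have hf1 : ∑ j, Z1 j j ^ 4 ≤ frob (Y1.transpose * Y1) := by
    refine (diag4_le _).trans (le_of_eq ?_)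
    rw [← frob_conj O (Y1.transpose * Y1) hO]
    congr 1
    simp only [Z1, Matrix.transpose_mul, Matrix.transpose_transpose]
    rw [show O.transpose * (Y1.transpose * O) * (O.transpose * Y1 * O) = 
      O.transpose * (Y1.transpose * (O * O.transpose) * Y1) * O by simp only [Matrix.mul_assoc], hO]
    simp
  have hSL : ∀ j, |S' j j| ≤ L := by
    intro j
    have := hS (fun i => U i j) (by
      have := congrFun (congrFun hU' j) j
      simpa [Matrix.mul_apply, pow_two] using this)
    convert this using 2
    simp only [S', Matrix.mul_apply, Matrix.transpose_apply, Finset.sum_mul]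
    rw [Finset.sum_comm]
  have hsum : ∑ j, (2 * l j ^ 2 * S' j j - S' j j ^ 2 - 2 * L * (16 / Q * (2 * s * Z1 j j) ^ 4 + 4 * (2 * s * Z2 j j) ^ 2))
      ≤ ∑ j, min (l j ^ 4) (Q ^ 2) := Finset.sum_le_sum fun j _ => scalar_ineq _ _ _ _ _ _ hQ (hSL j) (hlj j)
  refine le_trans ?_ hsum
  have : ∑ j, (2 * l j ^ 2 * S' j j - S' j j ^ 2 - 2 * L * (16 / Q * (2 * s * Z1 j j) ^ 4 + 4 * (2 * s * Z2 j j) ^ 2))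
     = 2 * ∑ j, l j ^ 2 * S' j j - ∑ j, S' j j ^ 2 - 2 * L * (256 * s ^ 4 / Q * ∑ j, Z1 j j ^ 4 + 16 * s ^ 2 * ∑ j, Z2 j j ^ 2) := by
    simp only [Finset.mul_sum, ← Finset.sum_sub_distrib, ← Finset.sum_add_distrib]
    refine Finset.sum_congr rfl fun j _ => ?_
    ring
  rw [this, ← htr]
  rcases isEmpty_or_nonempty (Fin N) with hN | ⟨⟨j0⟩⟩
  · simp [frob]
  have hL : 0 ≤ L := (abs_nonneg _).trans (hSL j0)
  gcongr

end


lemma osc_lower (k : ℝ) (hk : 1 ≤ k) (hs : sin (k * π) = 0) :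
    3 / (8 * π ^ 2) * (π / k) ^ (1/2 : ℝ) ≤ ∫ x in (0:ℝ)..π, cos (k * x) * x ^ (-(1/2) : ℝ) := by
  have hk0 : 0 < k := by linarith
  have hpi := pi_pos
  let G : ℝ → ℝ := fun x => 3 / 4 * ((1 - cos (k * x)) / k ^ 2) * x ^ (-(5/2) : ℝ)
  let H : ℝ → ℝ := fun x => sin (k * x) / k * x ^ (-(1/2) : ℝ) + (1 - cos (k * x)) / (2 * k ^ 2) * x ^ (-(3/2) : ℝ)
  have hF : IntervalIntegrable (fun x => cos (k * x) * x ^ (-(1/2) : ℝ)) volume 0 π :=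
    (intervalIntegral.intervalIntegrable_rpow' (by norm_num)).continuousOn_mul (by fun_prop)
  have hG0 : ∀ x, 0 < x → 0 ≤ G x := fun x hx => by
    have := cos_le_one (k * x)
    have : 0 ≤ 1 - cos (k * x) := by linarith
    positivity
  have hcos : ∀ x, 1 - cos (k * x) ≤ k ^ 2 * x ^ 2 / 2 := fun x => by
    have := one_sub_sq_div_two_le_cos (x := k * x)
    nlinarith
  have hG : IntervalIntegrable G volume 0 π := by
    have h0 : IntervalIntegrable (fun x : ℝ => x ^ (-(1/2) : ℝ)) volume 0 π :=
      intervalIntegral.intervalIntegrable_rpow' (by norm_num)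
    refine h0.mono_fun ?_ ?_
    · refine Measurable.aestronglyMeasurable ?_
      fun_prop
    · rw [Set.uIoc_of_le hpi.le]
      refine (ae_restrict_iff' measurableSet_Ioc).2 (Eventually.of_forall fun x hx => ?_)
      show ‖G x‖ ≤ ‖x ^ (-(1/2) : ℝ)‖
      rw [Real.norm_of_nonneg (hG0 x hx.1), Real.norm_of_nonneg (rpow_nonneg hx.1.le _)]
      have e : x ^ (-(1/2) : ℝ) = x ^ 2 * x ^ (-(5/2) : ℝ) := by
        rw [← rpow_natCast x 2, ← rpow_add hx.1]; norm_num
      rw [e]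
      refine mul_le_mul_of_nonneg_right ?_ (rpow_nonneg hx.1.le _)
      have : (1 - cos (k * x)) / k ^ 2 ≤ x ^ 2 / 2 := by
        rw [div_le_iff₀ (by positivity)]; linarith [hcos x]
      nlinarith [sq_nonneg x]
  have hd : ∀ x ∈ Set.Ioo 0 π, HasDerivAt H (cos (k * x) * x ^ (-(1/2) : ℝ) - G x) x := by
    intro x hx
    have h1 : HasDerivAt (fun x => k * x) k x := by simpa using (hasDerivAt_id x).const_mul k
    have r1 := hasDerivAt_rpow_const (x := x) (p := (-(1/2) : ℝ)) (Or.inl hx.1.ne')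
    have r2 := hasDerivAt_rpow_const (x := x) (p := (-(3/2) : ℝ)) (Or.inl hx.1.ne')
    have := ((h1.sin.div_const k).mul r1).add (((h1.cos.const_sub 1).div_const (2 * k ^ 2)).mul r2)
    refine this.congr_deriv ?_
    have e1 : (-(1/2) - 1 : ℝ) = -(3/2) := by norm_num
    have e2 : (-(3/2) - 1 : ℝ) = -(5/2) := by norm_num
    simp only [e1, e2, G]
    field_simp
    ring
  have hlim0 : Tendsto H (nhdsWithin 0 (Set.Ioi 0)) (nhds 0) := by
    have hb : ∀ᶠ x in nhdsWithin (0:ℝ) (Set.Ioi 0), ‖H x‖ ≤ 5 / 4 * x ^ (1/2 : ℝ) := by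
      filter_upwards [self_mem_nhdsWithin] with x hx
      have hx : 0 < x := hx
      have a1 : |sin (k * x) / k| ≤ x := by
        rw [abs_div, abs_of_pos hk0, div_le_iff₀ hk0]
        have := abs_sin_le_abs (x := k * x)
        rw [abs_of_pos (by positivity : 0 < k * x)] at this; linarith
      have a2 : |(1 - cos (k * x)) / (2 * k ^ 2)| ≤ x ^ 2 / 4 := by
        have := cos_le_one (k * x)
        rw [abs_of_nonneg (div_nonneg (by linarith) (by positivity)), div_le_iff₀ (by positivity)]
        nlinarith [hcos x]
      have e1 : x ^ (1/2 : ℝ) = x * x ^ (-(1/2) : ℝ) := by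
        nth_rw 2 [← rpow_one x]; rw [← rpow_add hx]; norm_num
      have e2 : x ^ (1/2 : ℝ) = x ^ 2 * x ^ (-(3/2) : ℝ) := by
        rw [← rpow_natCast x 2, ← rpow_add hx]; norm_num
      have b1 : |sin (k * x) / k * x ^ (-(1/2) : ℝ)| ≤ x ^ (1/2 : ℝ) := by
        rw [abs_mul, abs_of_nonneg (rpow_nonneg hx.le _), e1]
        exact mul_le_mul_of_nonneg_right a1 (rpow_nonneg hx.le _)
      have b2 : |(1 - cos (k * x)) / (2 * k ^ 2) * x ^ (-(3/2) : ℝ)| ≤ 1 / 4 * x ^ (1/2 : ℝ) := by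
        rw [abs_mul, abs_of_nonneg (rpow_nonneg hx.le _), e2, ← mul_assoc]
        exact mul_le_mul_of_nonneg_right (by linarith) (rpow_nonneg hx.le _)
      rw [Real.norm_eq_abs]
      exact (abs_add_le _ _).trans (by linarith)
    refine squeeze_zero_norm' hb ?_
    have : Tendsto (fun x : ℝ => 5 / 4 * x ^ (1/2 : ℝ)) (nhds 0) (nhds (5 / 4 * (0:ℝ) ^ (1/2 : ℝ))) :=
      ((continuous_rpow_const (by norm_num)).const_mul _).tendsto 0
    rw [zero_rpow (by norm_num), mul_zero] at this
    exact this.mono_left nhdsWithin_le_nhds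
  have hlimpi : Tendsto H (nhdsWithin π (Set.Iio π)) (nhds (H π)) := by
    have : ContinuousAt H π := by
      refine ContinuousAt.add (ContinuousAt.mul (by fun_prop) ?_) (ContinuousAt.mul (by fun_prop) ?_)
      · exact continuousAt_rpow_const _ _ (Or.inl hpi.ne')
      · exact continuousAt_rpow_const _ _ (Or.inl hpi.ne')
    exact this.tendsto.mono_left nhdsWithin_le_nhds
  have ftc := intervalIntegral.integral_eq_sub_of_hasDerivAt_of_tendsto hpi hd (hF.sub hG) hlim0 hlimpi
  rw [intervalIntegral.integral_sub hF hG] at ftc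
  have hHpi : 0 ≤ H π := by
    have := cos_le_one (k * π)
    have : 0 ≤ 1 - cos (k * π) := by linarith
    simp only [H, hs, zero_div, zero_mul, zero_add]
    positivity
  have hlow : 3 / (8 * π ^ 2) * (π / k) ^ (1/2 : ℝ) ≤ ∫ x in (0:ℝ)..π, G x := by
    have hsub : ∫ x in (π / (2 * k))..(π / k), G x ≤ ∫ x in (0:ℝ)..π, G x := by
      refine intervalIntegral.integral_mono_interval (by positivity) ?_ ?_ ?_ hG
      · gcongr; linarith
      · exact div_le_self hpi.le hk
      · refine (ae_restrict_iff' measurableSet_Ioc).2 (Eventually.of_forall fun x hx => hG0 x hx.1)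
    refine le_trans ?_ hsub
    have hab : π / (2 * k) ≤ π / k := by gcongr; linarith
    have hconst : ∫ x in (π / (2 * k))..(π / k), (3 / 4 * (1 / k ^ 2) * (π / k) ^ (-(5/2) : ℝ)) 
        ≤ ∫ x in (π / (2 * k))..(π / k), G x := by
      refine intervalIntegral.integral_mono_on hab (by simp) ?_ ?_
      · refine hG.mono_set ?_
        rw [Set.uIcc_of_le hab, Set.uIcc_of_le hpi.le]
        exact Set.Icc_subset_Icc (by positivity) (div_le_self hpi.le hk)
      · intro x hx
        have hx0 : 0 < x := lt_of_lt_of_le (by positivity) hx.1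
        have hc : cos (k * x) ≤ 0 := by
          refine cos_nonpos_of_pi_div_two_le_of_le ?_ ?_
          · have := hx.1; rw [div_le_iff₀ (by positivity)] at this; linarith
          · have := hx.2; rw [le_div_iff₀ hk0] at this; linarith
        have hr : (π / k) ^ (-(5/2) : ℝ) ≤ x ^ (-(5/2) : ℝ) :=
          rpow_le_rpow_of_nonpos hx0 hx.2 (by norm_num)
        simp only [G]
        have h9 : 0 ≤ 1 - cos (k * x) := by linarith
        gcongr
        linarith
    refine le_trans (le_of_eq ?_) hconst
    rw [intervalIntegral.integral_const, smul_eq_mul]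
    have e : (π / k) ^ (1/2 : ℝ) = (π / k) ^ 3 * (π / k) ^ (-(5/2) : ℝ) := by
      rw [← rpow_natCast (π / k) 3, ← rpow_add (by positivity)]; norm_num
    rw [e]
    field_simp
    ring
  linarith


noncomputable def ww (x : ℝ) : ℝ := |x| ^ (-(1 / 2 : ℝ))

lemma ww_nonneg (x : ℝ) : 0 ≤ ww x := rpow_nonneg (abs_nonneg _) _

lemma ww_meas : Measurable ww := by unfold ww; fun_prop

lemma ww_ii1 : IntervalIntegrable ww volume 0 π := by
  have h0 : IntervalIntegrable (fun x : ℝ => x ^ (-(1/2) : ℝ)) volume 0 π :=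
      intervalIntegral.intervalIntegrable_rpow' (by norm_num)
  refine h0.congr ?_
  rw [Set.uIoc_of_le pi_pos.le]
  intro x hx
  simp [ww, abs_of_pos hx.1]

lemma ww_ii2 : IntervalIntegrable ww volume (-π) 0 := by
  have := (IntervalIntegrable.iff_comp_neg (by simp)).1 ww_ii1
  have e : (fun x => ww (-x)) = ww := by funext x; simp [ww]
  rw [e] at this
  simpa using this.symm

lemma ww_int : IntegrableOn ww (Set.Ioc (-π) π) :=
  (intervalIntegrable_iff_integrableOn_Ioc_of_le (by linarith [pi_pos])).1 (ww_ii2.trans ww_ii1)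

lemma cosww_int (k : ℝ) : IntegrableOn (fun x => cos (k * x) * ww x) (Set.Ioc (-π) π) := by
  refine Integrable.bdd_mul (c := 1) ww_int (by fun_prop) ?_
  exact Eventually.of_forall fun x => by simpa using abs_cos_le_one _

lemma sinww_int (k : ℝ) : IntegrableOn (fun x => sin (k * x) * ww x) (Set.Ioc (-π) π) := by
  refine Integrable.bdd_mul (c := 1) ww_int (by fun_prop) ?_
  exact Eventually.of_forall fun x => by simpa using abs_sin_le_one _

noncomputable def rB (B : Set ℝ) (k : ℤ) : ℝ := ∫ x in B, cos (k * x) * ww x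

noncomputable def rr (k : ℤ) : ℝ := rB (Set.Ioc (-π) π) k

lemma rr_neg (k : ℤ) : rr (-k) = rr k := by
  simp [rr, rB]

lemma abs_rr_le (k : ℤ) : |rr k| ≤ rr 0 := by
  unfold rr rB
  refine (abs_integral_le_integral_abs).trans ?_
  refine integral_mono (cosww_int k).abs (cosww_int _) fun x => ?_
  simp only [abs_mul, abs_of_nonneg (ww_nonneg x), Int.cast_zero, zero_mul, cos_zero]
  exact mul_le_mul_of_nonneg_right (abs_cos_le_one _) (ww_nonneg x)

lemma rr_eq (k : ℤ) : rr k = 2 * ∫ x in (0:ℝ)..π, cos (k * x) * x ^ (-(1/2) : ℝ) := by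
  have hpi := pi_pos
  have hi := (intervalIntegrable_iff_integrableOn_Ioc_of_le (by linarith : -π ≤ π)).2 (cosww_int k)
  have h1 : IntervalIntegrable (fun x => cos (k * x) * ww x) volume (-π) 0 := hi.mono_set (by
    rw [Set.uIcc_of_le (by linarith), Set.uIcc_of_le (by linarith)]; exact Set.Icc_subset_Icc le_rfl hpi.le)
  have h2 : IntervalIntegrable (fun x => cos (k * x) * ww x) volume 0 π := hi.mono_set (by
    rw [Set.uIcc_of_le (by linarith), Set.uIcc_of_le (by linarith)]; exact Set.Icc_subset_Icc (by linarith) le_rfl)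
  have h3 : ∫ x in (-π)..0, cos (k * x) * ww x = ∫ x in (0:ℝ)..π, cos (k * x) * ww x := by
    have := intervalIntegral.integral_comp_neg (a := 0) (b := π) (fun x => cos (k * x) * ww x)
    rw [neg_zero] at this
    rw [← this]
    simp [ww]
  have h4 : ∫ x in (0:ℝ)..π, cos (k * x) * ww x = ∫ x in (0:ℝ)..π, cos (k * x) * x ^ (-(1/2) : ℝ) := by
    rw [intervalIntegral.integral_of_le hpi.le, intervalIntegral.integral_of_le hpi.le]
    refine setIntegral_congr_fun measurableSet_Ioc fun x hx => ?_
    simp [ww, abs_of_pos hx.1]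
  rw [← h4, rr, rB, ← intervalIntegral.integral_of_le (by linarith), 
    ← intervalIntegral.integral_add_adjacent_intervals h1 h2, h3]
  ring

lemma sinww_zero (k : ℤ) : ∫ x in Set.Ioc (-π) π, sin (k * x) * ww x = 0 := by
  have hpi := pi_pos
  rw [← intervalIntegral.integral_of_le (by linarith)]
  have := intervalIntegral.integral_comp_neg (a := -π) (b := π) (fun x => sin (k * x) * ww x)
  simp [ww] at this
  simp only [ww]
  linarith

lemma rr_lower (k : ℕ) (hk : 1 ≤ k) : 0 ≤ rr k ∧ (3 / (4 * π ^ 2)) ^ 2 * π / k ≤ rr k ^ 2 := by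
  have hpi := pi_pos
  have hk0 : (0:ℝ) < k := by positivity
  have := osc_lower k (by exact_mod_cast hk) (by rw [sin_nat_mul_pi])
  have e : rr k = 2 * ∫ x in (0:ℝ)..π, cos (k * x) * x ^ (-(1/2) : ℝ) := by
    simpa using rr_eq k
  have h0 : 0 ≤ 3 / (8 * π ^ 2) * (π / k) ^ (1/2 : ℝ) := by positivity
  refine ⟨by linarith, ?_⟩
  have h2 : (2 * (3 / (8 * π ^ 2) * (π / k) ^ (1/2 : ℝ))) ^ 2 ≤ rr k ^ 2 :=
    pow_le_pow_left₀ (by linarith) (by linarith) 2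
  refine le_trans (le_of_eq ?_) h2
  have h3 : ((π / k) ^ (1/2 : ℝ)) ^ 2 = π / k := by
    rw [← sqrt_eq_rpow, sq_sqrt (by positivity)]
  rw [mul_pow, mul_pow, h3]
  field_simp
  ring

lemma rr_zero_pos : 0 < rr 0 := by
  have h := (rr_lower 1 le_rfl)
  have h2 := abs_rr_le 1
  by_contra hc
  have : rr 1 = 0 := by
    have := abs_nonneg (rr 1); 
    exact abs_eq_zero.1 (by linarith)
  have hpi := pi_pos
  have h3 : 0 < (3 / (4 * π ^ 2)) ^ 2 * π / ((1:ℕ):ℝ) := by positivity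
  have h4 := h.2
  simp only [Nat.cast_one, this] at h4 h3
  linarith

lemma rr_nonneg (k : ℤ) : 0 ≤ rr k := by
  have h : ∀ n : ℕ, 0 ≤ rr n := fun n => by
    rcases Nat.eq_zero_or_pos n with h | h
    · rw [h]; exact rr_zero_pos.le
    · exact (rr_lower n h).1
  rcases Int.eq_nat_or_neg k with ⟨n, rfl | rfl⟩
  · exact h n
  · rw [rr_neg]; exact h n

lemma rr_sum_large (C : ℝ) : ∃ m : ℕ, C ≤ ∑ k ∈ Finset.range (m + 1), rr k ^ 2 := by
  have hpi := pi_pos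
  have hc : 0 < (3 / (4 * π ^ 2)) ^ 2 * π := by positivity
  set c := (3 / (4 * π ^ 2)) ^ 2 * π
  have h1 := (Real.tendsto_sum_range_one_div_nat_succ_atTop).const_mul_atTop hc
  obtain ⟨m, hm⟩ := (h1.eventually_ge_atTop C).exists
  refine ⟨m, hm.trans ?_⟩
  rw [Finset.sum_range_succ', Finset.mul_sum]
  have : ∑ i ∈ Finset.range m, c * (1 / ((i:ℝ) + 1)) ≤ ∑ k ∈ Finset.range m, rr ((k + 1 : ℕ) : ℤ) ^ 2 := by
    refine Finset.sum_le_sum fun i _ => ?_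
    have := (rr_lower (i + 1) (by omega)).2
    push_cast at this ⊢
    rwa [mul_one_div]
  have h0 := sq_nonneg (rr ((0:ℕ):ℤ))
  exact this.trans (le_add_of_nonneg_right h0)


noncomputable def hh {N : ℕ} (v : Fin N → ℝ) (x : ℝ) : ℝ :=
  ∑ i, ∑ j, v i * v j * cos ((((i:ℕ):ℤ) - ((j:ℕ):ℤ) : ℤ) * x)

lemma hh_nonneg {N : ℕ} (v : Fin N → ℝ) (x : ℝ) : 0 ≤ hh v x := by
  have : hh v x = (∑ i, v i * cos ((i:ℕ) * x)) ^ 2 + (∑ i, v i * sin ((i:ℕ) * x)) ^ 2 := by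
    rw [sq, sq, Finset.sum_mul_sum, Finset.sum_mul_sum, ← Finset.sum_add_distrib, hh]
    refine Finset.sum_congr rfl fun i _ => ?_
    rw [← Finset.sum_add_distrib]
    refine Finset.sum_congr rfl fun j _ => ?_
    push_cast
    rw [sub_mul, cos_sub]; ring
  rw [this]; positivity

lemma hh_cont {N : ℕ} (v : Fin N → ℝ) : Continuous (hh v) := by
  unfold hh; fun_prop

lemma cos_int (k : ℤ) : ∫ x in Set.Ioc (-π) π, cos (k * x) = if k = 0 then 2 * π else 0 := by
  rw [← intervalIntegral.integral_of_le (by linarith [pi_pos])]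
  split_ifs with h
  · subst h; simp; ring
  · have hk : (k:ℝ) ≠ 0 := by exact_mod_cast h
    rw [intervalIntegral.integral_comp_mul_left (fun x => cos x) hk, integral_cos]
    have := sin_int_mul_pi k
    rw [mul_neg, sin_neg, this]; simp

lemma hh_integral {N : ℕ} (v : Fin N → ℝ) :
    ∫ x in Set.Ioc (-π) π, hh v x = 2 * π * ∑ i, v i ^ 2 := by
  unfold hh
  have hi : ∀ k : ℤ, IntegrableOn (fun x => cos (k * x)) (Set.Ioc (-π) π) := fun k =>
    (Continuous.integrableOn_Ioc (by fun_prop))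
  rw [integral_finsetSum _ fun i _ => integrable_finsetSum _ fun j _ => (hi _).const_mul _, Finset.mul_sum]
  refine Finset.sum_congr rfl fun i _ => ?_
  rw [integral_finsetSum _ fun j _ => (hi _).const_mul _]
  rw [Finset.sum_eq_single i]
  · rw [integral_const_mul, cos_int]; simp; ring
  · intro j _ hj
    rw [integral_const_mul, cos_int, if_neg]; simp
    intro h; apply hj; ext; omega
  · simp

noncomputable def qB (B : Set ℝ) {N : ℕ} (v : Fin N → ℝ) : ℝ :=
  ∑ i, ∑ j, v i * v j * rB B (((i:ℕ):ℤ) - ((j:ℕ):ℤ))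

lemma qB_eq {B : Set ℝ} (hB : B ⊆ Set.Ioc (-π) π) {N : ℕ} (v : Fin N → ℝ) :
    IntegrableOn (fun x => hh v x * ww x) B ∧ qB B v = ∫ x in B, hh v x * ww x := by
  have hi : ∀ k : ℤ, IntegrableOn (fun x => cos (k * x) * ww x) B := fun k => (cosww_int k).mono_set hB
  have e : (fun x => hh v x * ww x) = fun x =>  ∑ i, ∑ j, v i * v j * (cos ((((i:ℕ):ℤ) - ((j:ℕ):ℤ) : ℤ) * x) * ww x) := by
    funext x
    simp only [hh, Finset.sum_mul, mul_assoc]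
  rw [e]
  have h1 := fun i : Fin N => integrable_finsetSum Finset.univ fun (j : Fin N) _ => (hi (((i:ℕ):ℤ) - ((j:ℕ):ℤ))).const_mul (v i * v j)
  refine ⟨integrable_finsetSum _ fun i _ => h1 i, ?_⟩
  rw [integral_finsetSum _ fun i _ => h1 i]
  refine Finset.sum_congr rfl fun i _ => ?_
  rw [integral_finsetSum _ fun j _ => (hi _).const_mul _]
  refine Finset.sum_congr rfl fun j _ => ?_
  rw [integral_const_mul, rB]

lemma qB_nonneg {B : Set ℝ} (hB : B ⊆ Set.Ioc (-π) π) {N : ℕ} (v : Fin N → ℝ) : 0 ≤ qB B v := by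
  rw [(qB_eq hB v).2]
  exact integral_nonneg fun x => mul_nonneg (hh_nonneg v x) (ww_nonneg x)

noncomputable def Bn (n : ℕ) : Set ℝ := Set.Ioc (-π) π ∩ {x | (n:ℝ) < ww x}

lemma Bn_sub (n : ℕ) : Bn n ⊆ Set.Ioc (-π) π := Set.inter_subset_left

lemma Bn_meas (n : ℕ) : MeasurableSet (Bn n) :=
  measurableSet_Ioc.inter (measurableSet_lt measurable_const ww_meas)

lemma Bn_tendsto : Tendsto (fun n => rB (Bn n) 0) atTop (nhds 0) := by
  have := tendsto_setIntegral_of_antitone (μ := volume) (f := fun x => cos ((0:ℤ) * x) * ww x) (s := Bn) Bn_meas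
    (fun a b hab x hx => ⟨hx.1, lt_of_le_of_lt (b := (b:ℝ)) (Nat.cast_le.2 hab) hx.2⟩)
    ⟨0, (cosww_int (0:ℤ)).mono_set (Bn_sub 0)⟩
  have e : (⋂ n, Bn n) = ∅ := by
    ext x
    simp only [Set.mem_iInter, Set.mem_empty_iff_false, iff_false, not_forall]
    obtain ⟨n, hn⟩ := exists_nat_ge (ww x)
    exact ⟨n, fun h => absurd h.2 (not_lt.2 hn)⟩
  rw [e] at this
  simpa [rB] using this

lemma qB_compl_le (n : ℕ) {N : ℕ} (v : Fin N → ℝ) (hv : ∑ i, v i ^ 2 = 1) :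
    qB (Set.Ioc (-π) π) v ≤ qB (Bn n) v + n * (2 * π) := by
  have h1 := qB_eq le_rfl v
  rw [h1.2, (qB_eq (Bn_sub n) v).2]
  have hs := setIntegral_union (f := fun x => hh v x * ww x) (μ := volume) (s := Bn n) (t := Set.Ioc (-π) π \ Bn n)
    Set.disjoint_sdiff_right (measurableSet_Ioc.diff (Bn_meas n)) (h1.1.mono_set (Bn_sub n))
    (h1.1.mono_set Set.sdiff_subset)
  rw [Set.union_sdiff_cancel (Bn_sub n)] at hs
  rw [hs]
  have hc : IntegrableOn (fun x => n * hh v x) (Set.Ioc (-π) π) :=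
    (Continuous.integrableOn_Ioc (by have := hh_cont v; fun_prop))
  have h2 : ∫ x in Set.Ioc (-π) π \ Bn n, hh v x * ww x ≤ ∫ x in Set.Ioc (-π) π \ Bn n, n * hh v x := by
    refine setIntegral_mono_on (h1.1.mono_set Set.sdiff_subset) (hc.mono_set Set.sdiff_subset)
      (measurableSet_Ioc.diff (Bn_meas n)) fun x hx => ?_
    rw [mul_comm]
    refine mul_le_mul_of_nonneg_right ?_ (hh_nonneg v x)
    by_contra h
    exact hx.2 ⟨hx.1, not_le.1 h⟩
  have h3 : ∫ x in Set.Ioc (-π) π \ Bn n, n * hh v x ≤ ∫ x in Set.Ioc (-π) π, n * hh v x :=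
    setIntegral_mono_set hc (Eventually.of_forall fun x => mul_nonneg (Nat.cast_nonneg _) (hh_nonneg v x))
      (LE.le.eventuallyLE Set.sdiff_subset)
  have h4 : ∫ x in Set.Ioc (-π) π, n * hh v x = n * (2 * π) := by
    rw [integral_const_mul, hh_integral, hv, mul_one]
  linarith

lemma qB_trace (B : Set ℝ) {N : ℕ} (V : Matrix (Fin N) (Fin N) ℝ) (hV : V * V.transpose = 1) :
    ∑ a, qB B (fun i => V i a) = N * rB B 0 := by
  unfold qB
  rw [Finset.sum_comm]
  have : ∀ i, ∑ a, ∑ j, V i a * V j a * rB B (((i:ℕ):ℤ) - ((j:ℕ):ℤ)) = rB B 0 := by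
    intro i
    rw [Finset.sum_comm]
    simp_rw [← Finset.sum_mul]
    have h : ∀ j, ∑ a, V i a * V j a = if i = j then 1 else 0 := fun j => by
      have := congrFun (congrFun hV i) j
      simpa [Matrix.mul_apply, Matrix.one_apply] using this
    simp_rw [h]
    simp
  simp_rw [this]
  simp

noncomputable def Dd {N : ℕ} (V : Matrix (Fin N) (Fin N) ℝ) (a : Fin N) : ℝ := qB (Set.Ioc (-π) π) (fun i => V i a)

lemma Dd_nonneg {N : ℕ} (V : Matrix (Fin N) (Fin N) ℝ) (a : Fin N) : 0 ≤ Dd V a := qB_nonneg le_rfl _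

lemma Dd_sum {N : ℕ} (V : Matrix (Fin N) (Fin N) ℝ) (hV : V * V.transpose = 1) :
    ∑ a, Dd V a = N * rr 0 := qB_trace _ V hV

lemma Dd_UI (η : ℝ) (hη : 0 < η) : ∃ K : ℝ, 0 < K ∧ ∀ (N : ℕ) (V : Matrix (Fin N) (Fin N) ℝ),
    V * V.transpose = 1 → V.transpose * V = 1 →
    ∑ a, (if Dd V a ≤ K then 0 else Dd V a) ≤ η * N := by
  have := Bn_tendsto.eventually (gt_mem_nhds (show (0:ℝ) < η / 2 by linarith))
  obtain ⟨n, hn, hn0⟩ := (this.and (eventually_ge_atTop 1)).exists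
  have hpi := pi_pos
  have hn1 : (1:ℝ) ≤ n := by exact_mod_cast hn0
  refine ⟨2 * (n * (2 * π)), by positivity, fun N V hV hV' => ?_⟩
  calc ∑ a, (if Dd V a ≤ 2 * (n * (2 * π)) then 0 else Dd V a) ≤ ∑ a, 2 * qB (Bn n) (fun i => V i a) := by
        refine Finset.sum_le_sum fun a _ => ?_
        have h0 := qB_nonneg (Bn_sub n) (fun i => V i a)
        split_ifs with h
        · linarith
        · have := qB_compl_le n (fun i => V i a) (by
            have := congrFun (congrFun hV' a) a
            simpa [Matrix.mul_apply, Matrix.one_apply, sq] using this)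
          change Dd V a ≤ _ at this
          linarith
    _ = 2 * (N * rB (Bn n) 0) := by rw [← Finset.mul_sum, qB_trace _ V hV]
    _ ≤ η * N := by nlinarith [(Nat.cast_nonneg N : (0:ℝ) ≤ N)]


lemma char_one (u : ℤ) : ∫ x in Set.Ioc (-π) π, Complex.exp (Complex.I * ((u * x : ℝ) : ℂ)) * ((ww x : ℝ) : ℂ)
    = ((rr u : ℝ) : ℂ) := by
  have e : ∀ x : ℝ, Complex.exp (Complex.I * ((u * x : ℝ) : ℂ)) * ((ww x : ℝ) : ℂ) =
      ((cos (u * x) * ww x : ℝ) : ℂ) + ((sin (u * x) * ww x : ℝ) : ℂ) * Complex.I := by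
    intro x
    rw [mul_comm Complex.I, Complex.exp_mul_I, ← Complex.ofReal_cos, ← Complex.ofReal_sin]
    push_cast; ring
  simp_rw [e]
  rw [integral_add (cosww_int u).ofReal ((sinww_int u).ofReal.mul_const _), integral_mul_const,
    integral_complex_ofReal, integral_complex_ofReal, sinww_zero, rr, rB]
  simp

lemma cov0 {Ω : Type} [MeasurableSpace Ω] {P : Measure Ω} {X : ℤ → ℤ → Ω → ℝ}
    (hXf : HasSpecDensity P X (fun q => |q.1 * q.2| ^ (-(1 / 2 : ℝ)))) (u v : ℤ) :
    ∫ ω, X 0 0 ω * X u v ω ∂P = rr u * rr v := by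
  have h := hXf u v
  have := setIntegral_prod_mul (μ := (volume : Measure ℝ)) (ν := (volume : Measure ℝ)) 
    (fun x : ℝ => Complex.exp (Complex.I * ((u * x : ℝ) : ℂ)) * ((ww x : ℝ) : ℂ))
    (fun x : ℝ => Complex.exp (Complex.I * ((v * x : ℝ) : ℂ)) * ((ww x : ℝ) : ℂ)) (Set.Ioc (-π) π) (Set.Ioc (-π) π)
  rw [char_one, char_one] at this
  have e : ∀ q : ℝ × ℝ, Complex.exp (Complex.I * ((u * q.1 + v * q.2 : ℝ) : ℂ)) * ((|q.1 * q.2| ^ (-(1 / 2 : ℝ)) : ℝ) : ℂ)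
    = (Complex.exp (Complex.I * ((u * q.1 : ℝ) : ℂ)) * ((ww q.1 : ℝ) : ℂ)) * (Complex.exp (Complex.I * ((v * q.2 : ℝ) : ℂ)) * ((ww q.2 : ℝ) : ℂ)) := by
    intro q
    rw [abs_mul, mul_rpow (abs_nonneg _) (abs_nonneg _)]
    simp only [ww]
    push_cast
    rw [mul_add, Complex.exp_add]; ring
  simp only [e] at h
  rw [specBox, Measure.volume_eq_prod, this] at h
  exact_mod_cast h.symm

lemma cov1 {Ω : Type} [MeasurableSpace Ω] {P : Measure Ω} {X : ℤ → ℤ → Ω → ℝ} (hX : StatGauss P X)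
    (hXf : HasSpecDensity P X (fun q => |q.1 * q.2| ^ (-(1 / 2 : ℝ)))) (j k j' k' : ℤ) :
    ∫ ω, X j k ω * X j' k' ω ∂P = rr (j - j') * rr (k - k') := by
  have := hX.stat j k (j' - j) (k' - k)
  rw [cov0 hXf, add_sub_cancel, add_sub_cancel] at this
  rw [this, ← rr_neg (j - j'), ← rr_neg (k - k'), neg_sub, neg_sub]

lemma gauss_fin {Ω : Type} [MeasurableSpace Ω] {P : Measure Ω} {X : ℤ → ℤ → Ω → ℝ} (hX : StatGauss P X)
    {N : ℕ} (c : Fin N × Fin N → ℝ) : ∃ v : NNReal,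
    P.map (fun ω => ∑ p, c p * X (((p.1:ℕ):ℤ)+1) (((p.2:ℕ):ℤ)+1) ω) = gaussianReal 0 v := by
  let em : Fin N × Fin N → ℤ × ℤ := fun p => (((p.1:ℕ):ℤ)+1, ((p.2:ℕ):ℤ)+1)
  obtain ⟨v, hv⟩ := hX.gauss (∑ p, Finsupp.single (em p) (c p))
  refine ⟨v, ?_⟩
  rw [← hv]
  congr 1
  funext ω
  change _ = Finsupp.sum (∑ p, Finsupp.single (em p) (c p)) (fun p a => a * X p.1 p.2 ω)
  rw [← Finsupp.sum_finsetSum_index (by simp) (by intros; ring)]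
  refine Finset.sum_congr rfl fun p _ => ?_
  rw [Finsupp.sum_single_index (by simp)]


def JG {Ω ι : Type} [Fintype ι] [MeasurableSpace Ω] (P : Measure Ω) (Z : ι → Ω → ℝ) : Prop :=
  (∀ i, Measurable (Z i)) ∧ ∀ c : ι → ℝ, ∃ v : NNReal, P.map (fun ω => ∑ i, c i * Z i ω) = gaussianReal 0 v

lemma JG.lin {Ω ι κ : Type} [Fintype ι] [Fintype κ] [MeasurableSpace Ω] {P : Measure Ω} {Z : ι → Ω → ℝ}
    (h : JG P Z) (M : κ → ι → ℝ) : JG P (fun k ω => ∑ i, M k i * Z i ω) := by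
  refine ⟨fun k => Finset.measurable_sum _ fun i _ => (h.1 i).const_mul _, fun c => ?_⟩
  obtain ⟨v, hv⟩ := h.2 (fun i => ∑ k, c k * M k i)
  refine ⟨v, ?_⟩
  rw [← hv]
  congr 1
  funext ω
  simp_rw [Finset.mul_sum, Finset.sum_mul]
  rw [Finset.sum_comm]
  simp only [mul_assoc]

lemma JG.memLp {Ω ι : Type} [Fintype ι] [MeasurableSpace Ω] {P : Measure Ω} {Z : ι → Ω → ℝ}
    (h : JG P Z) (i : ι) : MemLp (Z i) 4 P := by
  classical
  obtain ⟨v, hv⟩ := h.2 (Pi.single i 1)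
  simp only [Pi.single_apply, ite_mul, one_mul, zero_mul, Finset.sum_ite_eq', Finset.mem_univ, if_true] at hv
  exact (map_gauss_moments (h.1 i) hv).1

lemma JG.iss {Ω ι : Type} [Fintype ι] [MeasurableSpace Ω] {P : Measure Ω} [IsProbabilityMeasure P] {Z : ι → Ω → ℝ}
    (h : JG P Z) (i j k l : ι) : ∫ ω, Z i ω * Z j ω * Z k ω * Z l ω ∂P =
    (∫ ω, Z i ω * Z j ω ∂P) * (∫ ω, Z k ω * Z l ω ∂P) + (∫ ω, Z i ω * Z k ω ∂P) * (∫ ω, Z j ω * Z l ω ∂P)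
      + (∫ ω, Z i ω * Z l ω ∂P) * (∫ ω, Z j ω * Z k ω ∂P) := by
  classical
  refine isserlis (h.1 i) (h.1 j) (h.1 k) (h.1 l) fun a b c d => ?_
  obtain ⟨v, hv⟩ := h.2 (fun q => a * Pi.single (M := fun _ => ℝ) i 1 q + b * Pi.single (M := fun _ => ℝ) j 1 q
    + c * Pi.single (M := fun _ => ℝ) k 1 q + d * Pi.single (M := fun _ => ℝ) l 1 q)
  refine ⟨v, ?_⟩
  rw [← hv]
  congr 1
  funext ω
  simp [Pi.single_apply, add_mul, Finset.sum_add_distrib]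

lemma JG.i2 {Ω ι : Type} [Fintype ι] [MeasurableSpace Ω] {P : Measure Ω} [IsProbabilityMeasure P] {Z : ι → Ω → ℝ}
    (h : JG P Z) (i j : ι) : Integrable (fun ω => Z i ω * Z j ω) P := int2 (h.memLp i) (h.memLp j)

lemma JG.i4 {Ω ι : Type} [Fintype ι] [MeasurableSpace Ω] {P : Measure Ω} [IsProbabilityMeasure P] {Z : ι → Ω → ℝ}
    (h : JG P Z) (i j k l : ι) : Integrable (fun ω => Z i ω * Z j ω * Z k ω * Z l ω) P :=
  int4 (h.memLp i) (h.memLp j) (h.memLp k) (h.memLp l)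

lemma frob4 {Ω : Type} [MeasurableSpace Ω] {P : Measure Ω} [IsProbabilityMeasure P] {N : ℕ}
    {Z : Fin N × Fin N → Ω → ℝ} (h : JG P Z) (E : Fin N → ℝ) (K : ℝ) (hE : ∀ a, 0 ≤ E a ∧ E a ≤ K)
    (hc : ∀ a b c d, ∫ ω, Z (a, b) ω * Z (c, d) ω ∂P = if a = c ∧ b = d then E a * E b else 0)
    (Y : Ω → Matrix (Fin N) (Fin N) ℝ) (hY : ∀ ω a b, Y ω a b = Z (a, b) ω) :
    Integrable (fun ω => frob ((Y ω).transpose * Y ω)) P ∧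
    ∫ ω, frob ((Y ω).transpose * Y ω) ∂P ≤ 3 * K ^ 4 * N ^ 3 := by
  have e : (fun ω => frob ((Y ω).transpose * Y ω)) = fun ω => ∑ c, ∑ d, ∑ a, ∑ a',
      Z (a, c) ω * Z (a, d) ω * Z (a', c) ω * Z (a', d) ω := by
    funext ω
    simp only [frob, Matrix.mul_apply, Matrix.transpose_apply, hY, sq, Finset.sum_mul_sum]
    simp only [mul_assoc]
  rw [e]
  have hi := h.i4
  refine ⟨integrable_finsetSum _ fun c _ => integrable_finsetSum _ fun d _ => integrable_finsetSum _ fun a _ =>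
    integrable_finsetSum _ fun a' _ => hi _ _ _ _, ?_⟩
  rw [integral_finsetSum _ fun c _ => integrable_finsetSum _ fun d _ => integrable_finsetSum _ fun a _ =>
    integrable_finsetSum _ fun a' _ => hi _ _ _ _]
  have key : ∀ c d a a', ∫ ω, Z (a, c) ω * Z (a, d) ω * Z (a', c) ω * Z (a', d) ω ∂P ≤
      K ^ 4 * (if c = d then 1 else 0) + 2 * K ^ 4 * (if a = a' then 1 else 0) := by
    intro c d a a'
    rw [h.iss]
    simp only [hc]
    have hp : ∀ a b, 0 ≤ E a * E b ∧ E a * E b ≤ K ^ 2 := fun a b =>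
      ⟨mul_nonneg (hE a).1 (hE b).1, by
        rw [sq]; exact mul_le_mul (hE a).2 (hE b).2 (hE b).1 ((hE a).1.trans (hE a).2)⟩
    have hpp : ∀ a b c d, 0 ≤ E a * E b * (E c * E d) ∧ E a * E b * (E c * E d) ≤ K ^ 4 := fun a b c d =>
      ⟨mul_nonneg (hp _ _).1 (hp _ _).1, by
        have := mul_le_mul (hp a b).2 (hp c d).2 (hp c d).1 ((hp a b).1.trans (hp a b).2)
        calc _ ≤ _ := this
          _ = K ^ 4 := by ring⟩
    have hK : 0 ≤ K ^ 4 := by positivity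
    by_cases h1 : c = d <;> by_cases h2 : a = a'
    · subst h1 h2
      have := hpp a c a c
      simp; linarith
    · subst h1
      have := hpp a c a' c
      simp [h2]; linarith
    · subst h2
      have := hpp a c a d
      simp [h1, Ne.symm h1]; linarith
    · simp [h1, h2]
  calc _ ≤ ∑ c : Fin N, ∑ d : Fin N, ∑ a : Fin N, ∑ a' : Fin N,
        (K ^ 4 * (if c = d then 1 else 0) + 2 * K ^ 4 * (if a = a' then 1 else 0)) := by
        refine Finset.sum_le_sum fun c _ => ?_
        rw [integral_finsetSum _ fun d _ => integrable_finsetSum _ fun a _ =>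
          integrable_finsetSum _ fun a' _ => hi _ _ _ _]
        refine Finset.sum_le_sum fun d _ => ?_
        rw [integral_finsetSum _ fun a _ => integrable_finsetSum _ fun a' _ => hi _ _ _ _]
        refine Finset.sum_le_sum fun a _ => ?_
        rw [integral_finsetSum _ fun a' _ => hi _ _ _ _]
        exact Finset.sum_le_sum fun a' _ => key c d a a'
    _ = 3 * K ^ 4 * N ^ 3 := by
        simp only [Finset.sum_add_distrib, ← Finset.mul_sum, Finset.sum_ite_eq, Finset.mem_univ, if_true,
          Finset.sum_const, Finset.card_univ, Fintype.card_fin, nsmul_eq_mul]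
        simp
        ring


noncomputable def Tm (N : ℕ) : Matrix (Fin N) (Fin N) ℝ := fun i k => rr (((i:ℕ):ℤ) - ((k:ℕ):ℤ))

noncomputable def Sm (m N : ℕ) : Matrix (Fin N) (Fin N) ℝ := fun i k =>
  if |((i:ℕ):ℤ) - ((k:ℕ):ℤ)| ≤ m then 2 * rr 0 * rr (((i:ℕ):ℤ) - ((k:ℕ):ℤ)) else 0

lemma Tm_symm {N : ℕ} (i k : Fin N) : Tm N i k = Tm N k i := by
  unfold Tm; rw [← rr_neg, neg_sub]

lemma Sm_symm {m N : ℕ} (i k : Fin N) : Sm m N i k = Sm m N k i := by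
  unfold Sm; rw [← rr_neg (((i:ℕ):ℤ) - ((k:ℕ):ℤ)), neg_sub, abs_sub_comm]

lemma Tm_nonneg {N : ℕ} (i k : Fin N) : 0 ≤ Tm N i k := rr_nonneg _

lemma Sm_nonneg {m N : ℕ} (i k : Fin N) : 0 ≤ Sm m N i k := by
  unfold Sm
  have := rr_nonneg (((i:ℕ):ℤ) - ((k:ℕ):ℤ))
  have := rr_nonneg 0
  split_ifs
  · positivity
  · exact le_rfl

lemma exists_V (N : ℕ) : ∃ V : Matrix (Fin N) (Fin N) ℝ, V * V.transpose = 1 ∧ V.transpose * V = 1 ∧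
    V.transpose * Tm N * V = Matrix.diagonal (Dd V) := by
  have hT : (Tm N).IsHermitian := by
    ext i k; simp [Matrix.conjTranspose_apply]; exact Tm_symm k i
  obtain ⟨V, h1, h2, h3⟩ := spec_real hT
  refine ⟨V, h1, h2, ?_⟩
  have h4 : V.transpose * Tm N * V = Matrix.diagonal hT.eigenvalues := by
    conv_lhs => rw [h3]
    calc V.transpose * (V * Matrix.diagonal hT.eigenvalues * V.transpose) * V
        = (V.transpose * V) * Matrix.diagonal hT.eigenvalues * (V.transpose * V) := by simp only [Matrix.mul_assoc]
      _ = _ := by rw [h2]; simp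
  rw [h4]
  congr 1
  funext a
  have := congrFun (congrFun h4 a) a
  rw [Matrix.diagonal_apply_eq] at this
  rw [← this]
  simp only [Matrix.mul_apply, Matrix.transpose_apply, Dd, qB, Finset.sum_mul]
  rw [Finset.sum_comm]
  refine Finset.sum_congr rfl fun i _ => Finset.sum_congr rfl fun j _ => ?_
  change _ = V i a * V j a * Tm N i j
  ring

lemma covY {Ω : Type} [MeasurableSpace Ω] {P : Measure Ω} [IsProbabilityMeasure P] {N : ℕ}
    {x : Fin N × Fin N → Ω → ℝ} (h : JG P x)
    (hc : ∀ p q, ∫ ω, x p ω * x q ω ∂P = Tm N p.1 q.1 * Tm N p.2 q.2)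
    (V : Matrix (Fin N) (Fin N) ℝ) (hD : V.transpose * Tm N * V = Matrix.diagonal (Dd V))
    (g : Fin N → Fin N → ℝ) (a b c d : Fin N) :
    ∫ ω, (∑ p : Fin N × Fin N, g a b * (V p.1 a * V p.2 b) * x p ω) *
      (∑ p : Fin N × Fin N, g c d * (V p.1 c * V p.2 d) * x p ω) ∂P =
      if a = c ∧ b = d then (g a b) ^ 2 * (Dd V a * Dd V b) else 0 := by
  have hD' : ∀ a c, ∑ i, ∑ j, V i a * V j c * Tm N i j = if a = c then Dd V a else 0 := by
    intro a c
    have := congrFun (congrFun hD a) c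
    rw [Matrix.diagonal_apply] at this
    rw [← this]
    simp only [Matrix.mul_apply, Matrix.transpose_apply, Finset.sum_mul]
    rw [Finset.sum_comm]
    refine Finset.sum_congr rfl fun i _ => Finset.sum_congr rfl fun j _ => ?_
    ring
  simp_rw [Finset.sum_mul_sum]
  have hi : ∀ p q : Fin N × Fin N, Integrable (fun ω => g a b * (V p.1 a * V p.2 b) * x p ω * (g c d * (V q.1 c * V q.2 d) * x q ω)) P := by
    intro p q
    have := (h.i2 p q).const_mul (g a b * (V p.1 a * V p.2 b) * (g c d * (V q.1 c * V q.2 d)))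
    refine this.congr (Eventually.of_forall fun ω => ?_)
    simp only []; ring
  rw [integral_finsetSum _ fun p _ => integrable_finsetSum _ fun q _ => hi p q]
  have h2 : ∀ p q : Fin N × Fin N, ∫ ω, g a b * (V p.1 a * V p.2 b) * x p ω * (g c d * (V q.1 c * V q.2 d) * x q ω) ∂P
      = g a b * g c d * ((V p.1 a * V q.1 c * Tm N p.1 q.1) * (V p.2 b * V q.2 d * Tm N p.2 q.2)) := by
    intro p q
    have e : ∀ ω, g a b * (V p.1 a * V p.2 b) * x p ω * (g c d * (V q.1 c * V q.2 d) * x q ω)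
      = g a b * (V p.1 a * V p.2 b) * (g c d * (V q.1 c * V q.2 d)) * (x p ω * x q ω) := fun ω => by ring
    simp_rw [e]
    rw [integral_const_mul, hc]; ring
  have h3 : ∀ p : Fin N × Fin N, ∫ ω, ∑ q : Fin N × Fin N, g a b * (V p.1 a * V p.2 b) * x p ω * (g c d * (V q.1 c * V q.2 d) * x q ω) ∂P
      = g a b * g c d * ((∑ j, V p.1 a * V j c * Tm N p.1 j) * (∑ j, V p.2 b * V j d * Tm N p.2 j)) := by
    intro p
    rw [integral_finsetSum _ fun q _ => hi p q]
    simp_rw [h2]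
    rw [← Finset.mul_sum, Finset.sum_mul_sum, Fintype.sum_prod_type]
  simp_rw [h3]
  rw [← Finset.mul_sum, Fintype.sum_prod_type]
  simp only
  rw [← Finset.sum_mul_sum, hD', hD']
  by_cases h1 : a = c <;> by_cases h2 : b = d <;> simp [h1, h2, sq]

lemma trS {Ω : Type} [MeasurableSpace Ω] {P : Measure Ω} [IsProbabilityMeasure P] {N : ℕ} (m : ℕ)
    {x : Fin N × Fin N → Ω → ℝ} (h : JG P x)
    (hc : ∀ p q, ∫ ω, x p ω * x q ω ∂P = Tm N p.1 q.1 * Tm N p.2 q.2) (s : ℝ) (hs : s ^ 2 * N = 1)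
    (A : Ω → Matrix (Fin N) (Fin N) ℝ) (hA : ∀ ω i j, A ω i j = s * (x (i, j) ω + x (j, i) ω)) :
    Integrable (fun ω => (A ω * A ω * Sm m N).trace) P ∧
      frob (Sm m N) ≤ ∫ ω, (A ω * A ω * Sm m N).trace ∂P := by
  have hi := h.i2
  have hi2 : ∀ i l k : Fin N, Integrable (fun ω => A ω i l * A ω l k) P := by
    intro i l k
    simp_rw [hA]
    have e : ∀ ω, s * (x (i, l) ω + x (l, i) ω) * (s * (x (l, k) ω + x (k, l) ω)) = s ^ 2 * 
      (x (i, l) ω * x (l, k) ω + x (i, l) ω * x (k, l) ω + x (l, i) ω * x (l, k) ω + x (l, i) ω * x (k, l) ω) :=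
        fun ω => by ring
    simp_rw [e]
    exact ((((hi _ _).fun_add (hi _ _)).fun_add (hi _ _)).fun_add (hi _ _)).const_mul _
  have hv : ∀ i l k : Fin N, s ^ 2 * (2 * rr 0 * Tm N i k) ≤ ∫ ω, A ω i l * A ω l k ∂P := by
    intro i l k
    simp_rw [hA]
    have e : ∀ ω, s * (x (i, l) ω + x (l, i) ω) * (s * (x (l, k) ω + x (k, l) ω)) = s ^ 2 * 
      (x (i, l) ω * x (l, k) ω + x (i, l) ω * x (k, l) ω + x (l, i) ω * x (l, k) ω + x (l, i) ω * x (k, l) ω) :=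
        fun ω => by ring
    simp_rw [e]
    rw [integral_const_mul, integral_add (((hi _ _).fun_add (hi _ _)).fun_add (hi _ _)) (hi _ _),
      integral_add ((hi _ _).fun_add (hi _ _)) (hi _ _), integral_add (hi _ _) (hi _ _)]
    simp only [hc]
    have h0 : Tm N l l = rr 0 := by simp [Tm]
    have h1 := mul_nonneg (Tm_nonneg i l) (Tm_nonneg l k)
    have h2 := mul_nonneg (Tm_nonneg l k) (Tm_nonneg i l)
    rw [h0]
    refine mul_le_mul_of_nonneg_left ?_ (sq_nonneg _)
    linarith
  have e : ∀ ω, (A ω * A ω * Sm m N).trace = ∑ i, ∑ k, ∑ l, A ω i l * A ω l k * Sm m N k i := by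
    intro ω
    simp only [Matrix.trace, Matrix.diag, Matrix.mul_apply, Finset.sum_mul]
  simp_rw [e]
  have hi3 := fun i k l => (hi2 i l k).mul_const (Sm m N k i)
  refine ⟨integrable_finsetSum _ fun i _ => integrable_finsetSum _ fun k _ => integrable_finsetSum _ fun l _ =>
    hi3 i k l, ?_⟩
  rw [integral_finsetSum _ fun i _ => integrable_finsetSum _ fun k _ => integrable_finsetSum _ fun l _ =>
    hi3 i k l, frob]
  refine Finset.sum_le_sum fun i _ => ?_
  rw [integral_finsetSum _ fun k _ => integrable_finsetSum _ fun l _ => hi3 i k l]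
  refine Finset.sum_le_sum fun k _ => ?_
  rw [integral_finsetSum _ fun l _ => hi3 i k l]
  calc Sm m N i k ^ 2 = 2 * rr 0 * Tm N i k * Sm m N k i := by
        rw [Sm_symm k i]; unfold Sm Tm; split_ifs <;> ring
    _ = ∑ l : Fin N, s ^ 2 * (2 * rr 0 * Tm N i k) * Sm m N k i := by
        simp only [Finset.sum_const, Finset.card_univ, Fintype.card_fin, nsmul_eq_mul]
        calc _ = (s ^ 2 * N) * (2 * rr 0 * Tm N i k * Sm m N k i) := by rw [hs, one_mul]
          _ = _ := by ring
    _ ≤ _ := by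
        refine Finset.sum_le_sum fun l _ => ?_
        rw [integral_mul_const]
        exact mul_le_mul_of_nonneg_right (hv i l k) (Sm_nonneg _ _)

lemma frobS (m N : ℕ) (hN : m ≤ N) : 4 * rr 0 ^ 2 * ((N:ℝ) - m) * ∑ k ∈ Finset.range (m + 1), rr k ^ 2 ≤ frob (Sm m N) := by
  let g : ℕ → ℕ → ℝ := fun i k => if |(i:ℤ) - (k:ℤ)| ≤ m then 4 * rr 0 ^ 2 * rr ((i:ℤ) - (k:ℤ)) ^ 2 else 0
  have hg : ∀ i k, 0 ≤ g i k := fun i k => by simp only [g]; split_ifs <;> positivity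
  have e : frob (Sm m N) = ∑ i ∈ Finset.range N, ∑ k ∈ Finset.range N, g i k := by
    rw [← Fin.sum_univ_eq_sum_range (fun i => ∑ k ∈ Finset.range N, g i k), frob]
    refine Finset.sum_congr rfl fun i _ => ?_
    rw [← Fin.sum_univ_eq_sum_range (fun k => g i k)]
    refine Finset.sum_congr rfl fun k _ => ?_
    simp only [Sm, g]; split_ifs <;> ring
  rw [e]
  calc 4 * rr 0 ^ 2 * ((N:ℝ) - m) * ∑ k ∈ Finset.range (m + 1), rr k ^ 2 
      = ∑ i ∈ Finset.range (N - m), ∑ k ∈ Finset.range (m + 1), 4 * rr 0 ^ 2 * rr k ^ 2 := by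
        rw [Finset.sum_const, Finset.card_range, nsmul_eq_mul, Nat.cast_sub hN, ← Finset.mul_sum]; ring
    _ ≤ ∑ i ∈ Finset.range (N - m), ∑ k ∈ Finset.range N, g i k := by
        refine Finset.sum_le_sum fun i hi => ?_
        rw [Finset.mem_range] at hi
        calc _ = ∑ k ∈ Finset.Ico i (i + (m + 1)), g i k := by
              rw [Finset.sum_Ico_eq_sum_range, Nat.add_sub_cancel_left]
              refine Finset.sum_congr rfl fun k hk => ?_
              rw [Finset.mem_range] at hk
              have : (i:ℤ) - ((i + k : ℕ) : ℤ) = -k := by push_cast; ring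
              simp only [g, this, rr_neg, abs_neg, Nat.abs_cast]
              rw [if_pos (by omega)]
          _ ≤ _ := Finset.sum_le_sum_of_subset_of_nonneg (fun k hk => by
                rw [Finset.mem_Ico] at hk; rw [Finset.mem_range]; omega) fun k _ _ => hg i k
    _ ≤ _ := Finset.sum_le_sum_of_subset_of_nonneg (Finset.range_subset_range.2 (by omega)) 
        fun i _ _ => Finset.sum_nonneg fun k _ => hg i k

lemma Sm_row (m N : ℕ) (i : Fin N) : ∑ k, Sm m N i k ≤ 2 * rr 0 ^ 2 * (2 * m + 1) := by
  classical
  let F : Finset (Fin N) := Finset.univ.filter fun k => |((i:ℕ):ℤ) - ((k:ℕ):ℤ)| ≤ m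
  have hF : F.card ≤ 2 * m + 1 := by
    have := Finset.card_le_card_of_injOn (s := F) (t := Finset.Icc (((i:ℕ):ℤ) - m) (((i:ℕ):ℤ) + m)) (fun k => ((k:ℕ):ℤ))
      (fun k hk => by
        simp only [F, Finset.coe_filter, Set.mem_ofPred_eq, abs_le] at hk
        simp only [Finset.coe_Icc, Set.mem_Icc]; omega)
      (fun a _ b _ hab => by ext; simpa using hab)
    rw [Int.card_Icc] at this
    omega
  calc ∑ k, Sm m N i k = ∑ k ∈ F, 2 * rr 0 * rr (((i:ℕ):ℤ) - ((k:ℕ):ℤ)) := by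
        rw [Finset.sum_filter]; rfl
    _ ≤ ∑ k ∈ F, 2 * rr 0 ^ 2 := by
        refine Finset.sum_le_sum fun k _ => ?_
        have := (le_abs_self _).trans (abs_rr_le (((i:ℕ):ℤ) - ((k:ℕ):ℤ)))
        nlinarith [rr_zero_pos]
    _ ≤ _ := by
        rw [Finset.sum_const, nsmul_eq_mul, mul_comm]
        have : (F.card : ℝ) ≤ 2 * m + 1 := by exact_mod_cast hF
        exact mul_le_mul_of_nonneg_left this (by positivity)

lemma Sm_bound (m N : ℕ) (u : Fin N → ℝ) (hu : ∑ i, u i ^ 2 = 1) :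
    |∑ i, ∑ k, u i * Sm m N i k * u k| ≤ 2 * rr 0 ^ 2 * (2 * m + 1) := by
  have h1 : ∀ i k, |u i * Sm m N i k * u k| ≤ u i ^ 2 * Sm m N i k / 2 + u k ^ 2 * Sm m N k i / 2 := by
    intro i k
    rw [Sm_symm k i, abs_mul, abs_mul, abs_of_nonneg (Sm_nonneg i k), ← sq_abs (u i), ← sq_abs (u k)]
    nlinarith [mul_nonneg (sq_nonneg (|u i| - |u k|)) (Sm_nonneg (m := m) i k)]
  calc |∑ i, ∑ k, u i * Sm m N i k * u k| ≤ ∑ i, ∑ k, |u i * Sm m N i k * u k| :=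
        (Finset.abs_sum_le_sum_abs _ _).trans (Finset.sum_le_sum fun i _ => Finset.abs_sum_le_sum_abs _ _)
    _ ≤ ∑ i, ∑ k, (u i ^ 2 * Sm m N i k / 2 + u k ^ 2 * Sm m N k i / 2) :=
        Finset.sum_le_sum fun i _ => Finset.sum_le_sum fun k _ => h1 i k
    _ = ∑ i, ∑ k, u i ^ 2 * Sm m N i k := by
        simp_rw [Finset.sum_add_distrib]
        rw [Finset.sum_comm (f := fun i k => u k ^ 2 * Sm m N k i / 2), ← Finset.sum_add_distrib]
        simp_rw [← Finset.sum_add_distrib, add_halves]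
    _ = ∑ i, u i ^ 2 * ∑ k, Sm m N i k := by simp_rw [Finset.mul_sum]
    _ ≤ ∑ i, u i ^ 2 * (2 * rr 0 ^ 2 * (2 * m + 1)) :=
        Finset.sum_le_sum fun i _ => mul_le_mul_of_nonneg_left (Sm_row m N i) (sq_nonneg _)
    _ = _ := by rw [← Finset.sum_mul, hu, one_mul]


lemma perN_arith (n m r sg L kq er F tr f1 f2 : ℝ) (hn : 0 < n) (hL : 0 ≤ L) (hm : 2 * m ≤ n) (h0 : 0 ≤ r ^ 2 * sg)
    (hf : 4 * r ^ 2 * (n - m) * sg ≤ F) (ht : F ≤ tr) (c1 : f1 ≤ n * kq) (c2 : f2 ≤ n * er) :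
    2 * r ^ 2 * sg - 2 * L * (kq + er) ≤ n⁻¹ * (2 * tr - F - 2 * L * (f1 + f2)) := by
  have c4 := mul_le_mul_of_nonneg_left (add_le_add c1 c2) (by positivity : 0 ≤ 2 * L)
  have c3 : n * (2 * r ^ 2 * sg) ≤ F := by
    refine le_trans ?_ hf
    nlinarith
  rw [inv_mul_eq_div, le_div_iff₀ hn]
  linarith

set_option maxHeartbeats 1000000 in
lemma perN {Ω : Type} [MeasurableSpace Ω] {P : Measure Ω} [IsProbabilityMeasure P] {X : ℤ → ℤ → Ω → ℝ}
    (hX : StatGauss P X)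
    (hXf : HasSpecDensity P X (fun q => |q.1 * q.2| ^ (-(1 / 2 : ℝ))))
    (m N : ℕ) (hN : 1 ≤ N) (hmN : 2 * m ≤ N) (K Q η : ℝ) (hK : 0 < K) (hQ : 0 < Q)
    (hUI : ∀ (V : Matrix (Fin N) (Fin N) ℝ),
      V * V.transpose = 1 → V.transpose * V = 1 →
      ∑ a, (if Dd V a ≤ K then 0 else Dd V a) ≤ η * N) :
    ∃ Ψ : Ω → ℝ, Integrable Ψ P ∧ (∀ ω, Ψ ω ≤ esdEval (scaledW X N ω) (fun t => min (t ^ 4) (Q ^ 2))) ∧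
      2 * rr 0 ^ 2 * (∑ k ∈ Finset.range (m + 1), rr k ^ 2)
        - 2 * (2 * rr 0 ^ 2 * (2 * m + 1)) * (768 * K ^ 4 / Q + 32 * η * rr 0) ≤ ∫ ω, Ψ ω ∂P := by
  have hr0 := rr_zero_pos
  have hN0 : (0:ℝ) < N := by exact_mod_cast hN
  obtain ⟨V, hV, hV', hD⟩ := exists_V N
  set x : Fin N × Fin N → Ω → ℝ := fun p => X (((p.1:ℕ):ℤ)+1) (((p.2:ℕ):ℤ)+1) with hx
  have hJ : JG P x := ⟨fun p => hX.meas _ _, fun c => gauss_fin hX c⟩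
  have hc : ∀ p q, ∫ ω, x p ω * x q ω ∂P = Tm N p.1 q.1 * Tm N p.2 q.2 := by
    intro p q
    rw [hx, cov1 hX hXf]
    simp [Tm]
  set s : ℝ := (Real.sqrt N)⁻¹ with hs
  have hs2 : s ^ 2 = (N:ℝ)⁻¹ := by rw [hs, inv_pow, sq_sqrt hN0.le]
  have hs2' : s ^ 2 * N = 1 := by rw [hs2]; field_simp
  obtain ⟨hi1, hb1⟩ := trS m hJ hc s hs2' (scaledW X N) (fun ω i j => rfl)
  set me : Fin N → ℝ := fun a => if Dd V a ≤ K then 1 else 0 with hme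
  let g1 : Fin N → Fin N → ℝ := fun a b => me a * me b
  let g2 : Fin N → Fin N → ℝ := fun a b => 1 - me a * me b
  let Z : (Fin N → Fin N → ℝ) → Fin N × Fin N → Ω → ℝ := fun g q ω => 
    ∑ p : Fin N × Fin N, g q.1 q.2 * (V p.1 q.1 * V p.2 q.2) * x p ω
  let Y : (Fin N → Fin N → ℝ) → Ω → Matrix (Fin N) (Fin N) ℝ := fun g ω a b => Z g (a, b) ω
  have hZ : ∀ g, JG P (Z g) := fun g => hJ.lin (fun (q p : Fin N × Fin N) => g q.1 q.2 * (V p.1 q.1 * V p.2 q.2))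
  have hcZ : ∀ g a b c d, ∫ ω, Z g (a, b) ω * Z g (c, d) ω ∂P = if a = c ∧ b = d then (g a b) ^ 2 * (Dd V a * Dd V b) else 0 :=
    fun g a b c d => covY hJ hc V hD g a b c d
  have hme01 : ∀ a, me a = 0 ∨ me a = 1 := fun a => by simp only [hme]; split_ifs <;> simp
  obtain ⟨hi2, hb2⟩ := frob4 (hZ g1) (fun a => me a * Dd V a) K (fun a => by
      have := Dd_nonneg V a
      simp only [hme]
      split_ifs with h
      · simpa using ⟨this, h⟩
      · simpa using hK.le) (fun a b c d => by
      rw [hcZ]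
      split_ifs
      · simp only [g1]
        rcases hme01 a with h | h <;> rcases hme01 b with h' | h' <;> simp [h, h']
      · rfl) (Y g1) (fun _ _ _ => rfl)
  have hi3 : Integrable (fun ω => frob (Y g2 ω)) P := by
    unfold frob
    refine integrable_finsetSum _ fun a _ => integrable_finsetSum _ fun b _ => ?_
    simp only [sq]
    exact (hZ g2).i2 (a, b) (a, b)
  have hb3 : ∫ ω, frob (Y g2 ω) ∂P ≤ 2 * (η * N) * (N * rr 0) := by
    have e : ∫ ω, frob (Y g2 ω) ∂P = ∑ a, ∑ b, (g2 a b) ^ 2 * (Dd V a * Dd V b) := by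
      unfold frob
      have hi := fun a b => (hZ g2).i2 (a, b) (a, b)
      simp only [sq]
      rw [integral_finsetSum _ fun a _ => integrable_finsetSum _ fun b _ => hi a b]
      refine Finset.sum_congr rfl fun a _ => ?_
      rw [integral_finsetSum _ fun b _ => hi a b]
      refine Finset.sum_congr rfl fun b _ => ?_
      have := hcZ g2 a b a b
      simpa [sq] using this
    rw [e]
    set t : Fin N → ℝ := fun a => if Dd V a ≤ K then 0 else Dd V a with ht
    have htm : ∀ a, t a = (1 - me a) * Dd V a := fun a => by
      simp only [ht, hme]; split_ifs <;> simp
    calc ∑ a, ∑ b, (g2 a b) ^ 2 * (Dd V a * Dd V b) ≤ ∑ a, ∑ b, (t a * Dd V b + Dd V a * t b) := by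
          refine Finset.sum_le_sum fun a _ => Finset.sum_le_sum fun b _ => ?_
          have := mul_nonneg (Dd_nonneg V a) (Dd_nonneg V b)
          rw [htm, htm]
          simp only [g2]
          rcases hme01 a with h | h <;> rcases hme01 b with h' | h' <;> simp [h, h'] <;> linarith
      _ = 2 * (∑ a, t a) * (∑ b, Dd V b) := by
          simp_rw [Finset.sum_add_distrib]
          rw [← Finset.sum_mul_sum, ← Finset.sum_mul_sum]; ring
      _ ≤ 2 * (η * N) * (N * rr 0) := by
          rw [Dd_sum V hV]
          have := hUI V hV hV'
          refine mul_le_mul_of_nonneg_right ?_ (by positivity)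
          linarith
  set L : ℝ := 2 * rr 0 ^ 2 * (2 * m + 1) with hL
  have hL0 : 0 ≤ L := by positivity
  have hpt : ∀ ω, (N:ℝ)⁻¹ * (2 * (scaledW X N ω * scaledW X N ω * Sm m N).trace - frob (Sm m N) -
      2 * L * (256 * s ^ 4 / Q * frob ((Y g1 ω).transpose * Y g1 ω) + 16 * s ^ 2 * frob (Y g2 ω))) ≤
      esdEval (scaledW X N ω) (fun t => min (t ^ 4) (Q ^ 2)) := by
    intro ω
    have hA : (scaledW X N ω).IsHermitian := by
      ext i j
      simp [Matrix.conjTranspose_apply, scaledW, add_comm]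
    rw [esdEval, dif_pos hA]
    refine mul_le_mul_of_nonneg_left ?_ (by positivity)
    refine det_main (scaledW X N ω) (Matrix.of fun i j => x (i, j) ω) V (Y g1 ω) (Y g2 ω) (Sm m N) s L Q hA ?_ hV hV' ?_ hQ
      (Sm_bound m N)
    · ext i j
      rfl
    · ext a b
      rw [Matrix.add_apply]
      simp only [Y, Z]
      rw [← Finset.sum_add_distrib]
      simp only [Matrix.mul_apply, Matrix.transpose_apply, Matrix.of_apply, Finset.sum_mul]
      rw [Finset.sum_comm, Fintype.sum_prod_type]
      refine Finset.sum_congr rfl fun i _ => Finset.sum_congr rfl fun j _ => ?_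
      simp only [g1, g2]
      ring
  refine ⟨_, ?_, hpt, ?_⟩
  · exact (((hi1.const_mul 2).sub (integrable_const _)).sub
      (((hi2.const_mul _).add (hi3.const_mul _)).const_mul _)).const_mul _
  · have ia := hi1.const_mul 2
    have iab : Integrable (fun ω => 2 * (scaledW X N ω * scaledW X N ω * Sm m N).trace - frob (Sm m N)) P :=
      ia.sub (integrable_const _)
    have ib := hi2.const_mul (256 * s ^ 4 / Q)
    have ic := hi3.const_mul (16 * s ^ 2)
    rw [integral_const_mul, integral_sub iab ((ib.fun_add ic).const_mul _),
      integral_sub ia (integrable_const _), integral_const_mul, integral_const_mul, integral_add ib ic,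
      integral_const_mul, integral_const_mul, integral_const]
    simp only [probReal_univ, one_smul]
    have hf := frobS m N (by omega)
    have hs4 : s ^ 4 = (N:ℝ)⁻¹ ^ 2 := by rw [← hs2]; ring
    have hm2 : (2:ℝ) * m ≤ N := by exact_mod_cast hmN
    have hsg : 0 ≤ ∑ k ∈ Finset.range (m + 1), rr k ^ 2 := Finset.sum_nonneg fun k _ => sq_nonneg _
    set sg := ∑ k ∈ Finset.range (m + 1), rr k ^ 2
    have c1 : 256 * s ^ 4 / Q * ∫ ω, frob ((Y g1 ω).transpose * Y g1 ω) ∂P ≤ N * (768 * K ^ 4 / Q) := by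
      calc _ ≤ 256 * s ^ 4 / Q * (3 * K ^ 4 * N ^ 3) := mul_le_mul_of_nonneg_left hb2 (by positivity)
        _ = _ := by rw [hs4]; field_simp; ring
    have c2 : 16 * s ^ 2 * ∫ ω, frob (Y g2 ω) ∂P ≤ N * (32 * η * rr 0) := by
      calc _ ≤ 16 * s ^ 2 * (2 * (η * N) * (N * rr 0)) := mul_le_mul_of_nonneg_left hb3 (by positivity)
        _ = _ := by rw [hs2]; field_simp; ring
    exact perN_arith _ _ _ _ _ _ _ _ _ _ _ hN0 hL0 hm2 (mul_nonneg (sq_nonneg _) hsg) hf hb1 c1 c2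

/-- **Example 4.4.** For the density `f(x,y) = |xy|^{-1/2}`, the fourth moment
of the limiting spectral distribution is infinite. -/
theorem statement19 {Ω : Type} [MeasurableSpace Ω] (P : Measure Ω)
    [IsProbabilityMeasure P] (X : ℤ → ℤ → Ω → ℝ)
    (hX : StatGauss P X)
    (hXf : HasSpecDensity P X (fun q => |q.1 * q.2| ^ (-(1 / 2 : ℝ))))
    (μf : Measure ℝ) (hμf : IsProbabilityMeasure μf)
    (hconv : ESDTendstoInProb P (scaledW X) μf) :
    ∫⁻ t, ENNReal.ofReal (t ^ 4) ∂μf = ⊤ := by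
  by_contra hne
  have hr0 := rr_zero_pos
  set M := (∫⁻ t, ENNReal.ofReal (t ^ 4) ∂μf).toReal with hM
  have hM0 : 0 ≤ M := ENNReal.toReal_nonneg
  obtain ⟨m, hm⟩ := rr_sum_large ((M + 3) / (2 * rr 0 ^ 2))
  rw [div_le_iff₀ (by positivity)] at hm
  set L : ℝ := 2 * rr 0 ^ 2 * (2 * m + 1) with hL
  have hL0 : 0 < L := by positivity
  obtain ⟨K, hK, hUI⟩ := Dd_UI (1 / (128 * L * rr 0)) (by positivity)
  set Q : ℝ := 3072 * L * K ^ 4 + 1 with hQ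
  have hQ0 : 0 < Q := by positivity
  have hQb : 2 * L * (768 * K ^ 4 / Q) ≤ 1 / 2 := by
    rw [← mul_div_assoc, div_le_iff₀ hQ0, hQ]; linarith
  have hηb : 2 * L * (32 * (1 / (128 * L * rr 0)) * rr 0) = 1 / 2 := by field_simp; norm_num
  let g : ℝ → ℝ := fun t => min (t ^ 4) (Q ^ 2)
  have hg0 : ∀ t, 0 ≤ g t := fun t => le_min (by positivity) (by positivity)
  have hgQ : ∀ t, g t ≤ Q ^ 2 := fun t => min_le_right _ _
  have hgc : Continuous g := by simp only [g]; fun_prop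
  have hgM : ∫ t, g t ∂μf ≤ M := by
    rw [integral_eq_lintegral_of_nonneg_ae (Eventually.of_forall hg0) hgc.aestronglyMeasurable]
    exact ENNReal.toReal_mono hne (lintegral_mono fun t => ENNReal.ofReal_le_ofReal (min_le_left _ _))
  have hcv := hconv g hgc ⟨Q ^ 2, fun t => by rw [abs_of_nonneg (hg0 t)]; exact hgQ t⟩ 1 one_pos
  have hev := hcv.eventually (gt_mem_nhds (show (0:ENNReal) < ENNReal.ofReal (1 / (2 * Q ^ 2)) by
    rw [ENNReal.ofReal_pos]; positivity))
  obtain ⟨N, hbad, hN⟩ := (hev.and (eventually_ge_atTop (2 * m + 1))).exists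
  obtain ⟨Ψ, hi, hle, hE⟩ := perN hX hXf m N (by omega) (by omega) K Q _ hK hQ0 (hUI N)
  set bad : Set Ω := {ω | 1 ≤ |esdEval (scaledW X N ω) g - ∫ t, g t ∂μf|} with hb
  set B := toMeasurable P bad
  have hBm : MeasurableSet B := measurableSet_toMeasurable _ _
  have hBP : P.real B ≤ 1 / (2 * Q ^ 2) := by
    rw [Measure.real, measure_toMeasurable]
    exact (ENNReal.toReal_mono ENNReal.ofReal_ne_top hbad.le).trans (by
      rw [ENNReal.toReal_ofReal (by positivity)])
  have hN0 : (0:ℝ) < N := by exact_mod_cast (by omega : 0 < N)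
  have hΨQ : ∀ ω, Ψ ω ≤ Q ^ 2 := by
    intro ω
    refine (hle ω).trans ?_
    rw [esdEval]
    split_ifs with hA
    · rw [inv_mul_eq_div, div_le_iff₀ hN0]
      calc _ ≤ ∑ j : Fin N, Q ^ 2 := Finset.sum_le_sum fun j _ => hgQ _
        _ = _ := by simp [mul_comm]
    · positivity
  have hΨ : ∀ ω, Ψ ω ≤ M + 1 + B.indicator (fun _ => Q ^ 2) ω := by
    intro ω
    by_cases h : ω ∈ B
    · rw [Set.indicator_of_mem h]; linarith [hΨQ ω]
    · rw [Set.indicator_of_notMem h]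
      by_contra hc
      refine h (subset_toMeasurable P bad ?_)
      have h1 := hle ω
      change 1 ≤ |esdEval (scaledW X N ω) g - ∫ t, g t ∂μf|
      refine le_trans ?_ (le_abs_self _)
      change Ψ ω ≤ esdEval (scaledW X N ω) g at h1
      linarith
  have hiB : Integrable (B.indicator (fun _ => Q ^ 2)) P := (integrable_const _).indicator hBm
  have h1 : ∫ ω, Ψ ω ∂P ≤ ∫ ω, (M + 1 + B.indicator (fun _ => Q ^ 2) ω) ∂P :=
    integral_mono hi ((integrable_const _).add hiB) hΨ
  rw [integral_add (integrable_const _) hiB, integral_const, integral_indicator_const _ hBm] at h1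
  simp only [probReal_univ, one_smul, smul_eq_mul] at h1
  have h2 : P.real B * Q ^ 2 ≤ 1 / 2 := by
    calc _ ≤ 1 / (2 * Q ^ 2) * Q ^ 2 := mul_le_mul_of_nonneg_right hBP (by positivity)
      _ = 1 / 2 := by field_simp
  rw [mul_add] at hE
  linarith

end
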